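/- Monomial representation in the (p,q)-Bernstein basis: let n ≥ 1, let p, q be reals with 0 < q < p, and let 0 ≤ i ≤ n. Then for every real t, t^i = Σ_{k=i}^{n} p^{i(n−k)} ( [k choose i]_{p,q} / [n choose i]_{p,q} ) B_k^n(t;p,q). -/

import Mathlib

/-- The (p,q)-integer `[n]_{p,q} = Σ_{j=0}^{n-1} p^{n-1-j} q^j`. -/
noncomputable def pqInt (p q : ℝ) (n : ℕ) : ℝ :=
  ∑ j ∈ Finset.range n, p ^ (n - 1 - j) * q ^ j

/-- The (p,q)-factorial `[n]_{p,q}! = ∏_{j=1}^{n} [j]_{p,q}`. -/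
noncomputable def pqFact (p q : ℝ) : ℕ → ℝ
  | 0 => 1
  | n + 1 => pqFact p q n * pqInt p q (n + 1)

/-- The (p,q)-binomial coefficient `[n choose k]_{p,q}`. -/
noncomputable def pqBinom (p q : ℝ) (n k : ℕ) : ℝ :=
  pqFact p q n / (pqFact p q k * pqFact p q (n - k))

/-- The (p,q)-Bernstein basis function
`B_k^n(t;p,q) = p^{k(k-1)/2 - n(n-1)/2} [n choose k]_{p,q} t^k ∏_{s=0}^{n-k-1} (p^s - q^s t)`. -/
noncomputable def pqBernstein (p q : ℝ) (n k : ℕ) (t : ℝ) : ℝ :=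
  p ^ (k * (k - 1) / 2) / p ^ (n * (n - 1) / 2) * pqBinom p q n k * t ^ k *
    ∏ s ∈ Finset.range (n - k), (p ^ s - q ^ s * t)

theorem pqInt_succ_left (p q : ℝ) (n : ℕ) : pqInt p q (n + 1) = p ^ n + q * pqInt p q n := by
  unfold pqInt
  rw [Finset.sum_range_succ', Finset.mul_sum, add_comm]
  congr 1
  · simp
  · apply Finset.sum_congr rfl
    intro j _
    rw [show n + 1 - 1 - (j + 1) = n - 1 - j by omega, pow_succ]
    ring

theorem pqInt_zero (p q : ℝ) : pqInt p q 0 = 0 := by simp [pqInt]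

theorem pqInt_add (p q : ℝ) (a b : ℕ) :
    pqInt p q (a + b) = q ^ a * pqInt p q b + p ^ b * pqInt p q a := by
  induction a with
  | zero => simp [pqInt_zero]
  | succ a ih =>
    rw [show a + 1 + b = a + b + 1 by ring, pqInt_succ_left, ih, pqInt_succ_left]
    ring

theorem pqInt_pos {p q : ℝ} (hp : 0 < p) (hq : 0 < q) (n : ℕ) : 0 < pqInt p q (n + 1) := by
  unfold pqInt
  exact Finset.sum_pos (fun j _ => by positivity) ⟨0, by simp⟩

theorem pqFact_pos {p q : ℝ} (hp : 0 < p) (hq : 0 < q) (n : ℕ) : 0 < pqFact p q n := by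
  induction n with
  | zero => simp [pqFact]
  | succ n ih => exact mul_pos ih (pqInt_pos hp hq n)

/-- Pascal-type triangle. -/
noncomputable def pqG (p q : ℝ) : ℕ → ℕ → ℝ
  | 0, 0 => 1
  | 0, _ + 1 => 0
  | m + 1, 0 => pqG p q m 0
  | m + 1, j + 1 => q ^ (m - j) * pqG p q m j + p ^ (j + 1) * pqG p q m (j + 1)

theorem pqG_gt (p q : ℝ) (m : ℕ) : ∀ j, m < j → pqG p q m j = 0 := by
  induction m with
  | zero => intro j hj; obtain ⟨j, rfl⟩ : ∃ k, j = k + 1 := ⟨j - 1, by omega⟩; simp [pqG]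
  | succ m ih =>
    intro j hj; obtain ⟨j, rfl⟩ : ∃ k, j = k + 1 := ⟨j - 1, by omega⟩
    simp [pqG, ih j (by omega), ih (j + 1) (by omega)]

theorem pqG_zero (p q : ℝ) (m : ℕ) : pqG p q m 0 = 1 := by
  induction m with
  | zero => simp [pqG]
  | succ m ih => simp [pqG, ih]

theorem pqG_fact (p q : ℝ) (m : ℕ) :
    ∀ a b, a + b = m → pqG p q m a * (pqFact p q a * pqFact p q b) = pqFact p q m := by
  induction m with
  | zero =>
    intro a b h
    obtain ⟨rfl, rfl⟩ : a = 0 ∧ b = 0 := by omega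
    simp [pqG, pqFact]
  | succ m ih =>
    intro a b h
    rcases a with _ | a
    · obtain rfl : b = m + 1 := by omega
      simp [pqG_zero, pqFact]
    · have e1 := ih a b (by omega)
      have hI : pqInt p q (m + 1) = q ^ b * pqInt p q (a + 1) + p ^ (a + 1) * pqInt p q b := by
        rw [← pqInt_add]; congr 1; omega
      have hb : m - a = b := by omega
      simp only [pqG, hb]
      rw [pqFact.eq_2 p q m, hI, pqFact.eq_2 p q a]
      rcases b with _ | b
      · rw [pqG_gt p q m (a + 1) (by omega), pqInt_zero, ← e1]
        ring
      · have e2 := ih (a + 1) b (by omega)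
        rw [pqFact.eq_2 p q a] at e2
        rw [pqFact.eq_2 p q b] at e1 ⊢
        linear_combination q ^ (b + 1) * pqInt p q (a + 1) * e1 + p ^ (a + 1) * pqInt p q (b + 1) * e2

theorem pqG_sum (p q t : ℝ) (m : ℕ) :
    ∑ j ∈ Finset.range (m + 1), p ^ (j.choose 2) * pqG p q m j * t ^ j *
      ∏ s ∈ Finset.range (m - j), (p ^ s - q ^ s * t) = p ^ (m.choose 2) := by
  induction m with
  | zero => simp [pqG]
  | succ m ih =>
    have key : ∀ j, (j + 1).choose 2 = j + j.choose 2 := fun j => by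
      rw [Nat.choose_succ_succ' j 1, Nat.choose_one_right]
    let B : ℕ → ℝ := fun j => p ^ (j.choose 2) * (p ^ j * pqG p q m j) * t ^ j *
      ∏ s ∈ Finset.range (m + 1 - j), (p ^ s - q ^ s * t)
    let A : ℕ → ℝ := fun j => p ^ ((j + 1).choose 2) * (q ^ (m - j) * pqG p q m j) * t ^ (j + 1) *
      ∏ s ∈ Finset.range (m - j), (p ^ s - q ^ s * t)
    have hB : ∑ j ∈ Finset.range (m + 1), B (j + 1) + B 0 = ∑ j ∈ Finset.range (m + 1), B j := by
      rw [← Finset.sum_range_succ' B, Finset.sum_range_succ]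
      simp [B, pqG_gt p q m (m + 1) (by omega)]
    rw [Finset.sum_range_succ']
    have h1 : ∀ j ∈ Finset.range (m + 1), p ^ ((j + 1).choose 2) * pqG p q (m + 1) (j + 1) *
        t ^ (j + 1) * ∏ s ∈ Finset.range (m + 1 - (j + 1)), (p ^ s - q ^ s * t)
        = A j + B (j + 1) := by
      intro j _
      simp only [A, B, pqG, show m + 1 - (j + 1) = m - j by omega]
      ring
    rw [Finset.sum_congr rfl h1, Finset.sum_add_distrib, add_assoc]
    have h2 : p ^ (Nat.choose 0 2) * pqG p q (m + 1) 0 * t ^ 0 *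
        ∏ s ∈ Finset.range (m + 1 - 0), (p ^ s - q ^ s * t) = B 0 := by
      simp [B, pqG]
    rw [h2, hB, ← Finset.sum_add_distrib, key, pow_add, ← ih, Finset.mul_sum]
    apply Finset.sum_congr rfl
    intro j hj
    have hj' : j ≤ m := by simpa [Nat.lt_succ_iff] using hj
    obtain ⟨b, rfl⟩ := Nat.exists_eq_add_of_le hj'
    simp only [A, B, key, show j + b + 1 - j = b + 1 by omega, show j + b - j = b by omega,
      Finset.prod_range_succ]
    ring

theorem choose_two_add (i j : ℕ) : (i + j).choose 2 = i.choose 2 + j.choose 2 + i * j := by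
  induction j with
  | zero => simp
  | succ j ih =>
    have key : ∀ j, (j + 1).choose 2 = j + j.choose 2 := fun j => by
      rw [Nat.choose_succ_succ' j 1, Nat.choose_one_right]
    rw [← add_assoc, key, key, ih]; ring

/-- monomial representation in the (p,q)-Bernstein basis:
`t^i = Σ_{k=i}^{n} p^{i(n-k)} ([k choose i]_{p,q} / [n choose i]_{p,q}) B_k^n(t;p,q)`. -/
theorem pq_monomial_representation (n i : ℕ) (hn : 1 ≤ n) (hi : i ≤ n)
    (p q : ℝ) (h0 : 0 < q) (hqp : q < p) (t : ℝ) :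
    t ^ i = ∑ k ∈ Finset.Icc i n,
      p ^ (i * (n - k)) * (pqBinom p q k i / pqBinom p q n i) * pqBernstein p q n k t := by
  have hp : 0 < p := h0.trans hqp
  obtain ⟨m, rfl⟩ := Nat.exists_eq_add_of_le hi
  have hs := pqG_sum p q t m
  have hpm : p ^ (m.choose 2) ≠ 0 := by positivity
  rw [← Finset.Ico_succ_right_eq_Icc, Finset.sum_Ico_eq_sum_range,
    show Order.succ (i + m) - i = m + 1 by rw [Order.succ_eq_add_one]; omega]
  have hs2 : t ^ i = t ^ i / p ^ (m.choose 2) * p ^ (m.choose 2) := by field_simp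
  rw [hs2]
  nth_rewrite 2 [← hs]
  rw [Finset.mul_sum]
  apply Finset.sum_congr rfl
  intro j hj
  have hj' : j ≤ m := by simpa [Nat.lt_succ_iff] using hj
  obtain ⟨b, rfl⟩ := Nat.exists_eq_add_of_le hj'
  have hG := pqG_fact p q (j + b) j b rfl
  have f1 := (pqFact_pos hp h0 i).ne'
  have f2 := (pqFact_pos hp h0 j).ne'
  have f3 := (pqFact_pos hp h0 b).ne'
  have f4 := (pqFact_pos hp h0 (i + j)).ne'
  have f5 := (pqFact_pos hp h0 (j + b)).ne'
  have f6 := (pqFact_pos hp h0 (i + (j + b))).ne'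
  have hG' : pqG p q (j + b) j = pqFact p q (j + b) / (pqFact p q j * pqFact p q b) := by
    field_simp; linarith
  unfold pqBernstein pqBinom
  rw [← Nat.choose_two_right, ← Nat.choose_two_right, choose_two_add i j,
    choose_two_add i (j + b), show i + (j + b) - (i + j) = b by omega,
    show i + j - i = j by omega, show i + (j + b) - i = j + b by omega,
    show j + b - j = b by omega, hG']
  generalize ∏ s ∈ Finset.range b, (p ^ s - q ^ s * t) = P
  simp only [pow_add, mul_add]
  have g1 : p ^ (i * j) ≠ 0 := by positivity
  have g2 : p ^ (i * b) ≠ 0 := by positivity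
  have g3 : p ^ (i.choose 2) ≠ 0 := by positivity
  have g4 : p ^ ((j + b).choose 2) ≠ 0 := by positivity
  generalize p ^ (i * j) = x1 at *
  generalize p ^ (i * b) = x2 at *
  generalize p ^ (i.choose 2) = x3 at *
  generalize p ^ ((j + b).choose 2) = x4 at *
  generalize p ^ (j.choose 2) = x5 at *
  field_simp
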